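/- If the two smoothness indicators are equal, the third-order WENO reconstruction at the Gauss points of I₀ coincides with the high-order reconstruction: let p₀ be the degree-≤1 polynomial with cell averages a on I₋₁ and b on I₀, p₁ the degree-≤1 polynomial with cell averages b on I₀ and c on I₁, and M the degree-≤2 polynomial with cell averages a, b, c on I₋₁, I₀, I₁. For ε > 0 and β₀, β₁ ≥ 0 with β₀ = β₁, define ω̄ᵢ = (1/2)/(ε + βᵢ)² and ωᵢ = ω̄ᵢ/(ω̄₀ + ω̄₁). Then ω₀ = ω₁ = 1/2 and, for x_G = ±h/(2√3), ω₀·p₀(x_G) + ω₁·p₁(x_G) = M(x_G). -/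

import Mathlib

open Polynomial

lemma weno_eval_quad (p : Polynomial ℝ) (hp : p.degree ≤ 2) (x : ℝ) :
    p.eval x = p.coeff 0 + p.coeff 1 * x + p.coeff 2 * x ^ 2 := by
  have hn : p.natDegree < 3 := by
    have := natDegree_le_of_degree_le (n := 2) hp
    omega
  rw [eval_eq_sum_range' hn]
  simp [Finset.sum_range_succ]

lemma weno_integral_quad (p : Polynomial ℝ) (hp : p.degree ≤ 2) (u v : ℝ) :
    ∫ x in u..v, p.eval x = p.coeff 0 * (v - u) + p.coeff 1 * (v ^ 2 - u ^ 2) / 2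
      + p.coeff 2 * (v ^ 3 - u ^ 3) / 3 := by
  have hd : ∀ x ∈ Set.uIcc u v, HasDerivAt (fun x : ℝ => p.coeff 0 * x + p.coeff 1 * x ^ 2 / 2
      + p.coeff 2 * x ^ 3 / 3) (p.eval x) x := by
    intro x _
    rw [weno_eval_quad p hp x]
    have h1 := (hasDerivAt_id' x).const_mul (p.coeff 0)
    have h2 := ((hasDerivAt_pow 2 x).const_mul (p.coeff 1)).div_const 2
    have h3 := ((hasDerivAt_pow 3 x).const_mul (p.coeff 2)).div_const 3
    refine ((h1.add h2).add h3).congr_deriv ?_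
    norm_num
    ring
  rw [intervalIntegral.integral_eq_sub_of_hasDerivAt hd
    (p.continuous.intervalIntegrable _ _)]
  ring

/-- If the two smoothness indicators are equal, the third-order WENO reconstruction at
the Gauss points of `I₀ = [−h/2, h/2]` coincides with the high-order reconstruction:
with `p₀` (degree ≤ 1) having cell averages `a` on `I₋₁ = [−3h/2, −h/2]` and `b` on `I₀`,
`p₁` (degree ≤ 1) having cell averages `b` on `I₀` and `c` on `I₁ = [h/2, 3h/2]`, and `M`
(degree ≤ 2) having cell averages `a`, `b`, `c` on `I₋₁`, `I₀`, `I₁`, and with `ε > 0`,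
`β₀, β₁ ≥ 0`, `β₀ = β₁`, the nonlinear weights `ωᵢ = ω̄ᵢ/(ω̄₀+ω̄₁)`, where
`ω̄ᵢ = (1/2)/(ε+βᵢ)²`, satisfy `ω₀ = ω₁ = 1/2`, and at both Gauss points
`x_G = ±h/(2√3)` one has `ω₀ p₀(x_G) + ω₁ p₁(x_G) = M(x_G)`. -/
theorem weno3_equal_smoothness_gives_high_order (h : ℝ) (hh : 0 < h)
    (p₀ p₁ M : Polynomial ℝ)
    (hp₀deg : p₀.degree ≤ 1) (hp₁deg : p₁.degree ≤ 1) (hMdeg : M.degree ≤ 2)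
    (a b c : ℝ)
    (hp₀a : (1 / h) * ∫ x in (-(3 * h / 2))..(-(h / 2)), p₀.eval x = a)
    (hp₀b : (1 / h) * ∫ x in (-(h / 2))..(h / 2), p₀.eval x = b)
    (hp₁b : (1 / h) * ∫ x in (-(h / 2))..(h / 2), p₁.eval x = b)
    (hp₁c : (1 / h) * ∫ x in (h / 2)..(3 * h / 2), p₁.eval x = c)
    (hMa : (1 / h) * ∫ x in (-(3 * h / 2))..(-(h / 2)), M.eval x = a)
    (hMb : (1 / h) * ∫ x in (-(h / 2))..(h / 2), M.eval x = b)
    (hMc : (1 / h) * ∫ x in (h / 2)..(3 * h / 2), M.eval x = c)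
    (ε β₀ β₁ : ℝ) (hε : 0 < ε) (hβ₀ : 0 ≤ β₀) (hβ₁ : 0 ≤ β₁) (hββ : β₀ = β₁) :
    let w₀ : ℝ := (1 / 2) / (ε + β₀) ^ 2
    let w₁ : ℝ := (1 / 2) / (ε + β₁) ^ 2
    let ω₀ : ℝ := w₀ / (w₀ + w₁)
    let ω₁ : ℝ := w₁ / (w₀ + w₁)
    ω₀ = 1 / 2 ∧ ω₁ = 1 / 2 ∧
    ∀ xG : ℝ, (xG = -(h / (2 * Real.sqrt 3)) ∨ xG = h / (2 * Real.sqrt 3)) →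
      ω₀ * p₀.eval xG + ω₁ * p₁.eval xG = M.eval xG := by
  intro w₀ w₁ ω₀ ω₁
  have hw : 0 < w₀ := by
    have : 0 < ε + β₀ := by linarith
    positivity
  have hww : w₁ = w₀ := by simp only [w₀, w₁, hββ]
  have e0 : ω₀ = 1 / 2 := by
    simp only [ω₀, hww]
    field_simp
    norm_num
  have e1 : ω₁ = 1 / 2 := by
    simp only [ω₁, hww]
    field_simp
    norm_num
  refine ⟨e0, e1, ?_⟩
  intro xG hx
  have hsq : xG ^ 2 = h ^ 2 / 12 := by
    have h3 : Real.sqrt 3 ^ 2 = 3 := Real.sq_sqrt (by norm_num)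
    rcases hx with rfl | rfl
    · rw [neg_sq, div_pow, mul_pow, h3]; norm_num
    · rw [div_pow, mul_pow, h3]; norm_num
  have d0 : p₀.degree ≤ 2 := hp₀deg.trans (by norm_num)
  have d1 : p₁.degree ≤ 2 := hp₁deg.trans (by norm_num)
  have z0 : p₀.coeff 2 = 0 :=
    coeff_eq_zero_of_degree_lt (lt_of_le_of_lt hp₀deg (by norm_num))
  have z1 : p₁.coeff 2 = 0 :=
    coeff_eq_zero_of_degree_lt (lt_of_le_of_lt hp₁deg (by norm_num))
  rw [e0, e1, weno_eval_quad p₀ d0, weno_eval_quad p₁ d1, weno_eval_quad M hMdeg]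
  rw [weno_integral_quad _ d0, z0] at hp₀a hp₀b
  rw [weno_integral_quad _ d1, z1] at hp₁b hp₁c
  rw [weno_integral_quad _ hMdeg] at hMa hMb hMc
  rw [z0, z1, hsq]
  have hne : h ≠ 0 := hh.ne'
  have q1 : p₀.coeff 0 - p₀.coeff 1 * h = a := by
    rw [← hp₀a]; field_simp; ring
  have q2 : p₀.coeff 0 = b := by
    rw [← hp₀b]; field_simp; ring
  have q3 : p₁.coeff 0 = b := by
    rw [← hp₁b]; field_simp; ring
  have q4 : p₁.coeff 0 + p₁.coeff 1 * h = c := by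
    rw [← hp₁c]; field_simp; ring
  have q5 : M.coeff 0 - M.coeff 1 * h + M.coeff 2 * (13 * h ^ 2 / 12) = a := by
    rw [← hMa]; field_simp; ring
  have q6 : M.coeff 0 + M.coeff 2 * (h ^ 2 / 12) = b := by
    rw [← hMb]; field_simp; ring
  have q7 : M.coeff 0 + M.coeff 1 * h + M.coeff 2 * (13 * h ^ 2 / 12) = c := by
    rw [← hMc]; field_simp; ring
  have q8 : M.coeff 1 = (p₀.coeff 1 + p₁.coeff 1) / 2 := by
    apply mul_right_cancel₀ hne
    linarith
  rw [q8]
  linarith
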